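/- For all k ≥ 1, a complete multipartite graph G belongs to D̂_k if and only if there exist integers b ≥ a ≥ 1 and p ≥ 2 with k + 1 = a + (p−1)b such that G is isomorphic to the complete (p+1)-partite graph K_{a,b,…,b} with one colour class of size a and p colour classes of size b, and moreover if p = 2 then a = b. -/

import Mathlib

open SimpleGraph

/-- The degree of a vertex in a finite simple graph. -/
noncomputable def degC {V : Type} [Fintype V] (G : SimpleGraph V) (v : V) : ℕ := by
  classical exact G.degree v

/-- The minimum degree of a finite simple graph. -/
noncomputable def minDegC {V : Type} [Fintype V] (G : SimpleGraph V) : ℕ := by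
  classical exact G.minDegree

/-- `H` is a minor of `G`: there is a family of nonempty, pairwise disjoint,
connected branch sets, one for each vertex of `H`, such that every edge of `H`
is realised by an edge of `G` between the corresponding branch sets. -/
def IsMinorOf {W V : Type} (H : SimpleGraph W) (G : SimpleGraph V) : Prop :=
  ∃ B : W → Set V,
    (∀ w, (B w).Nonempty) ∧
    (∀ u w : W, u ≠ w → Disjoint (B u) (B w)) ∧
    (∀ w, (G.induce (B w)).Connected) ∧
    (∀ ⦃u w : W⦄, H.Adj u w → ∃ a ∈ B u, ∃ b ∈ B w, G.Adj a b)

/-- `H` is a proper minor of `G`: a minor that is not isomorphic to `G`. -/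
def IsProperMinorOf {W V : Type} (H : SimpleGraph W) (G : SimpleGraph V) : Prop :=
  IsMinorOf H G ∧ ¬ Nonempty (H ≃g G)

/-- `G ∈ D_k`: every minor of `G` has minimum degree at most `k`. -/
def MemD (k : ℕ) {V : Type} (G : SimpleGraph V) : Prop :=
  ∀ (W : Type) [Fintype W] (H : SimpleGraph W), IsMinorOf H G → minDegC H ≤ k

/-- `G ∈ D̂_k`: `G ∉ D_k` but every proper minor of `G` is in `D_k`. -/
def MemDHat (k : ℕ) {V : Type} (G : SimpleGraph V) : Prop :=
  ¬ MemD k G ∧ ∀ (W : Type) [Fintype W] (H : SimpleGraph W), IsProperMinorOf H G → MemD k H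

/-- `G` is a complete multipartite graph: its vertices can be coloured so that
two vertices are adjacent iff they have distinct colours. -/
def IsCompleteMultipartiteGraph {V : Type} (G : SimpleGraph V) : Prop :=
  ∃ (ι : Type) (c : V → ι), ∀ u v : V, G.Adj u v ↔ c u ≠ c v

/-! ### Minimum degree -/

lemma lt_minDegC_iff {V : Type} [Fintype V] {G : SimpleGraph V} {k : ℕ} :
    k < minDegC G ↔ Nonempty V ∧ ∀ v, k < (G.neighborSet v).ncard := by
  classical
  have hdeg : ∀ v, (G.neighborSet v).ncard = G.degree v := fun v => by
    rw [← G.card_neighborSet_eq_degree v, Set.ncard_eq_toFinset_card', Set.toFinset_card]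
  have hmin : minDegC G = G.minDegree := by
    unfold minDegC
    congr!
  rw [hmin]
  simp only [hdeg]
  constructor
  · intro h
    refine ⟨?_, fun v => h.trans_le (G.minDegree_le_degree v)⟩
    by_contra hV
    rw [not_nonempty_iff] at hV
    rw [G.minDegree_of_subsingleton] at h
    omega
  · rintro ⟨_, h⟩
    obtain ⟨v, hv⟩ := G.exists_minimal_degree_vertex
    exact hv ▸ h v

lemma lt_minDegC_of_equiv {W V : Type} [Fintype W] [Fintype V] {H : SimpleGraph W}
    {G : SimpleGraph V} {k : ℕ} (e : W ≃ V) (he : ∀ u w, H.Adj u w → G.Adj (e u) (e w))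
    (h : k < minDegC H) : k < minDegC G := by
  rw [lt_minDegC_iff] at h ⊢
  refine ⟨h.1.map e, fun v => (h.2 (e.symm v)).trans_le ?_⟩
  rw [← Set.ncard_image_of_injective _ e.injective]
  refine Set.ncard_le_ncard ?_
  rintro _ ⟨w, hw, rfl⟩
  simpa using he _ _ hw

/-! ### Minors -/

lemma IsMinorOf.of_le {V : Type} {H G : SimpleGraph V} (h : H ≤ G) : IsMinorOf H G := by
  refine ⟨fun v => {v}, fun v => Set.singleton_nonempty v, fun u w huw => by simpa using huw,
    fun v => ?_, fun u w huw => ⟨u, rfl, w, rfl, h huw⟩⟩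
  exact (SimpleGraph.connected_iff_exists_forall_reachable _).2
    ⟨⟨v, rfl⟩, fun ⟨w, hw⟩ => by obtain rfl : w = v := hw; rfl⟩

lemma IsMinorOf.trans {X W V : Type} {K : SimpleGraph X} {H : SimpleGraph W} {G : SimpleGraph V}
    (hKH : IsMinorOf K H) (hHG : IsMinorOf H G) : IsMinorOf K G := by
  obtain ⟨C, hCne, hCdisj, hCconn, hCadj⟩ := hKH
  obtain ⟨B, hBne, hBdisj, hBconn, hBadj⟩ := hHG
  refine ⟨fun x => ⋃ w ∈ C x, B w, fun x => ?_, fun x y hxy => ?_, fun x => ?_, fun x y hxy => ?_⟩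
  · obtain ⟨w, hw⟩ := hCne x
    obtain ⟨v, hv⟩ := hBne w
    exact ⟨v, Set.mem_biUnion hw hv⟩
  · rw [Set.disjoint_iUnion₂_left]
    intro w hw
    rw [Set.disjoint_iUnion₂_right]
    intro w' hw'
    refine hBdisj _ _ ?_
    rintro rfl
    exact Set.disjoint_left.1 (hCdisj x y hxy) hw hw'
  · have hmem : ∀ {w v}, w ∈ C x → v ∈ B w → v ∈ ⋃ w ∈ C x, B w :=
      fun hw hv => Set.mem_biUnion hw hv
    have hsame : ∀ w (hw : w ∈ C x) u v (hu : u ∈ B w) (hv : v ∈ B w),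
        (G.induce (⋃ w ∈ C x, B w)).Reachable ⟨u, hmem hw hu⟩ ⟨v, hmem hw hv⟩ := by
      intro w hw u v hu hv
      exact ((hBconn w).preconnected ⟨u, hu⟩ ⟨v, hv⟩).map
        (SimpleGraph.induceHomOfLE G (fun _ h => hmem hw h)).toHom
    have hwalk : ∀ (w w' : C x), (H.induce (C x)).Walk w w' → ∀ u v (hu : u ∈ B w) (hv : v ∈ B w'),
        (G.induce (⋃ w ∈ C x, B w)).Reachable ⟨u, hmem w.2 hu⟩ ⟨v, hmem w'.2 hv⟩ := by
      intro w w' p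
      induction p with
      | nil => exact fun u v hu hv => hsame _ (Subtype.prop _) u v hu hv
      | @cons w₁ w₂ w₃ hadj _ ih =>
        intro u v hu hv
        obtain ⟨a, ha, b, hb, hab⟩ := hBadj (show H.Adj w₁ w₂ from hadj)
        refine (hsame _ w₁.2 u a hu ha).trans (Reachable.trans ?_ (ih b v hb hv))
        exact SimpleGraph.Adj.reachable (show G.Adj a b from hab)
    obtain ⟨w, hw⟩ := hCne x
    obtain ⟨v, hv⟩ := hBne w
    refine (SimpleGraph.connected_iff_exists_forall_reachable _).2 ⟨⟨v, hmem hw hv⟩, ?_⟩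
    rintro ⟨u, hu⟩
    obtain ⟨w', hw', hu'⟩ := Set.mem_iUnion₂.1 hu
    obtain ⟨p⟩ := (hCconn x).preconnected ⟨w, hw⟩ ⟨w', hw'⟩
    exact hwalk _ _ p v u hv hu'
  · obtain ⟨w, hw, w', hw', hadj⟩ := hCadj hxy
    obtain ⟨a, ha, b, hb, hab⟩ := hBadj hadj
    exact ⟨a, Set.mem_biUnion hw ha, b, Set.mem_biUnion hw' hb, hab⟩

lemma injective_of_mem_of_disjoint {W V : Type} {B : W → Set V}
    (hB : ∀ u w, u ≠ w → Disjoint (B u) (B w)) {f : W → V} (hf : ∀ w, f w ∈ B w) :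
    Function.Injective f := by
  intro u w huw
  by_contra hne
  exact Set.disjoint_left.1 (hB u w hne) (hf u) (huw ▸ hf w)

lemma IsMinorOf.card_le {W V : Type} [Fintype W] [Fintype V] {H : SimpleGraph W}
    {G : SimpleGraph V} (h : IsMinorOf H G) : Fintype.card W ≤ Fintype.card V := by
  obtain ⟨B, hne, hdisj, -, -⟩ := h
  choose f hf using hne
  exact Fintype.card_le_of_injective f (injective_of_mem_of_disjoint hdisj hf)

lemma IsMinorOf.exists_equiv_of_card_le {W V : Type} [Fintype W] [Fintype V]
    {H : SimpleGraph W} {G : SimpleGraph V} (h : IsMinorOf H G)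
    (hcard : Fintype.card V ≤ Fintype.card W) :
    ∃ e : W ≃ V, ∀ u w, H.Adj u w → G.Adj (e u) (e w) := by
  have hle := h.card_le
  obtain ⟨B, hne, hdisj, -, hadj⟩ := h
  choose f hf using hne
  have hinj := injective_of_mem_of_disjoint hdisj hf
  have hbij : Function.Bijective f :=
    (Fintype.bijective_iff_injective_and_card f).2 ⟨hinj, hle.antisymm hcard⟩
  have hB : ∀ w, ∀ x ∈ B w, x = f w := by
    intro w x hx
    obtain ⟨u, rfl⟩ := hbij.2 x
    by_contra hne
    exact Set.disjoint_left.1 (hdisj u w fun h => hne (h ▸ rfl)) (hf u) hx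
  refine ⟨Equiv.ofBijective f hbij, fun u w huw => ?_⟩
  obtain ⟨a, ha, b, hb, hab⟩ := hadj huw
  rw [hB u a ha, hB w b hb] at hab
  exact hab

/-- Membership in `D̂_k` only depends on the minimum degrees of the minors of `G`. -/
lemma memDHat_iff {k : ℕ} {V : Type} [Fintype V] {G : SimpleGraph V} :
    MemDHat k G ↔ k < minDegC G ∧
      ∀ (W : Type) [Fintype W] (H : SimpleGraph W), IsMinorOf H G → k < minDegC H →
        Nonempty (H ≃g G) := by
  constructor
  · rintro ⟨hG, hprop⟩
    have hiso : ∀ (W : Type) [Fintype W] (H : SimpleGraph W), IsMinorOf H G → k < minDegC H →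
        Nonempty (H ≃g G) := by
      intro W _ H hH hk
      by_contra hn
      exact hk.not_ge (hprop W H ⟨hH, hn⟩ W H (.of_le le_rfl))
    refine ⟨?_, hiso⟩
    simp only [MemD, not_forall, not_le] at hG
    obtain ⟨W, _, H, hH, hk⟩ := hG
    obtain ⟨e⟩ := hiso W H hH hk
    exact lt_minDegC_of_equiv e.toEquiv (fun _ _ h => e.map_adj_iff.2 h) hk
  · rintro ⟨hk, hiso⟩
    refine ⟨fun h => hk.not_ge (h V G (.of_le le_rfl)), ?_⟩
    rintro W _ H ⟨hH, hn⟩ X _ K hK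
    by_contra! hlt
    obtain ⟨e⟩ := hiso X K (hK.trans hH) hlt
    obtain ⟨f, hf⟩ := hK.exists_equiv_of_card_le
      (hH.card_le.trans (Fintype.card_congr e.toEquiv).ge)
    exact hn (hiso W H hH (lt_minDegC_of_equiv f hf hlt))

/-! ### Complete multipartite graphs -/

lemma ncard_neighborSet_add_ncard_class {V ι : Type} [Fintype V] {G : SimpleGraph V} {c : V → ι}
    (hc : ∀ u v, G.Adj u v ↔ c u ≠ c v) (v : V) :
    (G.neighborSet v).ncard + {u | c u = c v}.ncard = Fintype.card V := by
  have h : G.neighborSet v = {u | c u = c v}ᶜ := by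
    ext u
    simp [hc, eq_comm]
  rw [h, add_comm, Set.ncard_add_ncard_compl, Nat.card_eq_fintype_card]

lemma ncard_eq_sum_ncard_class {V ι : Type} [Fintype V] [Fintype ι] (c : V → ι) (P : V → Prop) :
    {v | P v}.ncard = ∑ i, {v | P v ∧ c v = i}.ncard := by
  classical
  have h : ∀ Q : V → Prop, {v | Q v}.ncard = (Finset.univ.filter Q).card := fun Q => by
    rw [Set.ncard_eq_toFinset_card']
    simp
  simp only [h]
  rw [Finset.card_eq_sum_card_fiberwise (f := c) (t := Finset.univ) (by simp)]
  simp only [Finset.filter_filter]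
  congr!

/-! ### The graphs `K_{a,b,…,b}` are minor-minimal -/

/-- Here `n i` is the size of the `i`-th colour class, `r i` counts its vertices that do not form
a singleton branch set, and `t` counts the branch sets that are not singletons. -/
lemma sum_eq_zero_of_degree_bounds {a b p t : ℕ} (ha : 1 ≤ a) (hp : 2 ≤ p)
    (hp2 : p = 2 → a = b) (n r : Fin (p + 1) → ℕ) (hn0 : n 0 = a) (hn : ∀ i, i ≠ 0 → n i = b)
    (hr : ∀ i, r i ≤ n i) (ht2 : 2 * t ≤ ∑ i, r i) (ht : ∀ i, t + r i ≤ ∑ i, r i)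
    (hdeg : ∀ i, r i < n i → a + (p - 1) * b + ∑ i, r i + n i ≤ t + r i + ∑ i, n i)
    (hall : (∀ i, r i = n i) → a + (p - 1) * b ≤ t) : ∑ i, r i = 0 := by
  obtain ⟨q, rfl⟩ : ∃ q, p = q + 2 := ⟨p - 2, by omega⟩
  have hq : (q + 2 - 1) * b = q * b + b := by
    rw [show q + 2 - 1 = q + 1 by omega]; ring
  rw [hq] at hdeg hall
  have hnsum : ∑ i, n i = a + (q * b + 2 * b) := by
    rw [Fin.sum_univ_succ, hn0, Finset.sum_congr rfl fun i _ => hn _ (Fin.succ_ne_zero i)]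
    simp
    ring
  rw [hnsum] at hdeg
  by_cases hex : ∃ i, i ≠ 0 ∧ r i < b
  · obtain ⟨i, hi0, hi⟩ := hex
    have hcl : ∀ j, n j = b → r j < b → ∑ i, r i ≤ t + r j := by
      intro j hj hrj
      have := hdeg j (by omega)
      omega
    obtain ⟨j, hj⟩ : ∃ j, j ∉ ({0, i} : Finset (Fin (q + 2 + 1))) := by
      by_contra! h
      have := Finset.card_le_card (fun x _ => h x : Finset.univ ⊆ _)
      have := Finset.card_le_two (a := (0 : Fin (q + 2 + 1))) (b := i)
      simp at *
      omega
    simp only [Finset.mem_insert, Finset.mem_singleton, not_or] at hj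
    have hij : r i + r j ≤ ∑ i, r i := by
      rw [← Finset.sum_pair (f := r) (Ne.symm hj.2)]
      exact Finset.sum_le_sum_of_subset (Finset.subset_univ _)
    obtain ⟨l, hli, hlj, hl⟩ : ∃ l, l ≠ i ∧ l ≠ j ∧ n l = b := by
      rcases Nat.eq_zero_or_pos q with rfl | hq
      · exact ⟨0, hi0.symm, Ne.symm hj.1, hn0.trans (hp2 rfl)⟩
      · obtain ⟨l, hl⟩ : ∃ l, l ∉ ({0, i, j} : Finset (Fin (q + 2 + 1))) := by
          by_contra! h
          have := Finset.card_le_card (fun x _ => h x : Finset.univ ⊆ _)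
          have := Finset.card_le_three (a := (0 : Fin (q + 2 + 1))) (b := i) (c := j)
          simp at *
          omega
        simp only [Finset.mem_insert, Finset.mem_singleton, not_or] at hl
        exact ⟨l, hl.2.1, hl.2.2, hn l hl.1⟩
    have hijl : r l + (r i + r j) ≤ ∑ i, r i := by
      rw [← Finset.sum_pair (f := r) (Ne.symm hj.2), ← Finset.sum_insert (by simp [hli, hlj])]
      exact Finset.sum_le_sum_of_subset (Finset.subset_univ _)
    have h1 := hcl i (hn i hi0) hi
    have h2 := hcl j (hn j hj.1)
    have h3 := hcl l hl
    have h4 := hr j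
    rw [hn j hj.1] at h4
    omega
  · push Not at hex
    have heq : ∀ i, i ≠ 0 → r i = b := fun i hi =>
      le_antisymm (hn i hi ▸ hr i) (hex i hi)
    have hrsum : ∑ i, r i = r 0 + (q * b + 2 * b) := by
      rw [Fin.sum_univ_succ, Finset.sum_congr rfl fun i _ => heq _ (Fin.succ_ne_zero i)]
      simp
      ring
    have h0 := hr 0
    have hd := hdeg 0
    exfalso
    have hta : a + (q * b + b) ≤ t := by
      rcases h0.lt_or_eq with h | h
      · have := hd h
        omega
      · refine hall fun i => ?_
        by_cases hi : i = 0
        · rw [hi, h]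
        · rw [heq i hi, hn i hi]
    generalize q * b = x at *
    omega

lemma card_le_of_isMinorOf_of_lt_minDegC {a b p k : ℕ} (ha : 1 ≤ a) (hp : 2 ≤ p)
    (hk : k + 1 = a + (p - 1) * b) (hp2 : p = 2 → a = b) {V W : Type} [Fintype V] [Fintype W]
    {G : SimpleGraph V} {H : SimpleGraph W} {c : V → Fin (p + 1)}
    (hc : ∀ u v, G.Adj u v ↔ c u ≠ c v) (hc0 : {v | c v = 0}.ncard = a)
    (hci : ∀ i, i ≠ 0 → {v | c v = i}.ncard = b) (hH : IsMinorOf H G) (hlt : k < minDegC H) :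
    Fintype.card V ≤ Fintype.card W := by
  obtain ⟨B, hne, hdisj, hconn, hadj⟩ := hH
  obtain ⟨⟨w₀⟩, hdeg⟩ := lt_minDegC_iff.1 hlt
  choose f hf using hne
  have hinj := injective_of_mem_of_disjoint hdisj hf
  set S : Set V := {v | ∃ w, B w = {v}}
  set T : Set W := {w | f w ∉ S}
  have hdisjS : ∀ w ∈ T, ∀ v ∈ B w, v ∉ S := by
    rintro w hw v hv ⟨u, hu⟩
    have huw : u = w := by
      by_contra h
      exact Set.disjoint_left.1 (hdisj u w h) (hu ▸ rfl) hv
    subst huw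
    have := hf u
    rw [hu] at this
    exact hw ⟨u, by rw [hu, this]⟩
  have hsing : ∀ w, w ∉ T → B w = {f w} := by
    intro w hw
    obtain ⟨u, hu⟩ : f w ∈ S := not_not.1 hw
    have huw : u = w := by
      by_contra h
      exact Set.disjoint_left.1 (hdisj u w h) (hu ▸ rfl) (hf w)
    exact huw ▸ hu
  have hedge : ∀ w : T, ∃ x ∈ B w, ∃ y ∈ B w, c x ≠ c y := by
    rintro ⟨w, hw⟩
    have hnt : ∃ v ∈ B w, v ≠ f w := by
      by_contra! h
      exact hw ⟨w, Set.eq_singleton_iff_unique_mem.2 ⟨hf w, h⟩⟩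
    obtain ⟨v, hv, hvf⟩ := hnt
    have : Nontrivial (B w) := ⟨⟨v, hv⟩, ⟨f w, hf w⟩, by simpa using hvf⟩
    obtain ⟨u, hu⟩ := (hconn w).preconnected.exists_adj_of_nontrivial ⟨v, hv⟩
    exact ⟨v, hv, u, u.2, (hc _ _).1 hu⟩
  choose x hx y hy hxy using hedge
  set n : Fin (p + 1) → ℕ := fun i => {v | c v = i}.ncard
  set r : Fin (p + 1) → ℕ := fun i => {v | v ∉ S ∧ c v = i}.ncard with hr
  have hrsum : ∑ i, r i = {v | v ∉ S}.ncard := (ncard_eq_sum_ncard_class c _).symm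
  have hnsum : ∑ i, n i = Fintype.card V := by
    have := ncard_eq_sum_ncard_class c (fun _ => True)
    simp only [true_and, Set.ofPred_true, Set.ncard_univ, Nat.card_eq_fintype_card] at this
    exact this.symm
  have hinjT : ∀ g : T → V, (∀ w : T, g w ∈ B w) → Function.Injective g := fun g hg =>
    injective_of_mem_of_disjoint (B := fun w : T => B w)
      (fun u w huw => hdisj _ _ fun h => huw (Subtype.ext h)) hg
  have ht2 : 2 * T.ncard ≤ ∑ i, r i := by
    have hd : Disjoint (Set.range x) (Set.range y) := by
      rw [Set.disjoint_left]
      rintro _ ⟨u, rfl⟩ ⟨w, hw⟩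
      have huw : u = w := by
        by_contra h
        exact Set.disjoint_left.1 (hdisj u w fun h' => h (Subtype.ext h')) (hx u) (hw ▸ hy w)
      subst huw
      exact hxy u (by rw [hw])
    rw [hrsum, two_mul]
    calc T.ncard + T.ncard = (Set.range x ∪ Set.range y).ncard := by
          rw [Set.ncard_union_eq hd, Set.ncard_range_of_injective (hinjT x hx),
            Set.ncard_range_of_injective (hinjT y hy), Nat.card_coe_set_eq]
      _ ≤ _ := by
          refine Set.ncard_le_ncard ?_
          rintro _ (⟨w, rfl⟩ | ⟨w, rfl⟩)
          · exact hdisjS w w.2 _ (hx w)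
          · exact hdisjS w w.2 _ (hy w)
  have hrcompl : ∀ i, {v | v ∉ S ∧ c v ≠ i}.ncard + r i = ∑ i, r i := by
    intro i
    rw [hrsum, hr, ← Set.ncard_union_eq]
    · congr 1
      ext v
      simp only [Set.mem_union, Set.mem_ofPred_eq]
      tauto
    · rw [Set.disjoint_left]
      exact fun v h h' => h.2 h'.2
  have ht : ∀ i, T.ncard + r i ≤ ∑ i, r i := by
    intro i
    have hz : ∀ w : T, ∃ z ∈ B w, c z ≠ i := by
      intro w
      by_cases h : c (x w) = i
      · exact ⟨y w, hy w, fun h' => hxy w (h.trans h'.symm)⟩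
      · exact ⟨x w, hx w, h⟩
    choose z hz hzi using hz
    rw [← hrcompl i]
    refine Nat.add_le_add_right ?_ _
    rw [← Nat.card_coe_set_eq, ← Set.ncard_range_of_injective (hinjT z hz)]
    refine Set.ncard_le_ncard ?_
    rintro _ ⟨w, rfl⟩
    exact ⟨hdisjS w w.2 _ (hz w), hzi w⟩
  have hncompl : ∀ i, {v | v ∈ S ∧ c v ≠ i}.ncard + (∑ i, r i) + n i = r i + ∑ i, n i := by
    intro i
    have h1 := hrcompl i
    have h2 : {v | v ∈ S ∧ c v ≠ i}.ncard + {v | v ∉ S ∧ c v ≠ i}.ncard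
        + {v | c v = i}.ncard = Fintype.card V := by
      rw [← Set.ncard_union_eq, ← Set.ncard_union_eq, ← Nat.card_eq_fintype_card,
        ← Set.ncard_univ]
      · congr 1
        ext v
        simp only [Set.mem_union, Set.mem_ofPred_eq, Set.mem_univ, iff_true]
        tauto
      · rw [Set.disjoint_left]
        rintro v (h | h) h' <;> exact h.2 h'
      · rw [Set.disjoint_left]
        exact fun v h h' => h'.1 h.1
    rw [hnsum]
    change _ + _ + {v | c v = i}.ncard = _
    omega
  have hd : ∀ i, r i < n i → a + (p - 1) * b + ∑ i, r i + n i ≤ T.ncard + r i + ∑ i, n i := by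
    intro i hi
    obtain ⟨v, hvi, hv⟩ : ∃ v, c v = i ∧ v ∈ S := by
      by_contra! h
      exact hi.not_ge (Set.ncard_le_ncard fun v hv => ⟨h v hv, hv⟩)
    obtain ⟨w, hw⟩ := hv
    have hle : (H.neighborSet w).ncard ≤ T.ncard + {v | v ∈ S ∧ c v ≠ i}.ncard := by
      refine (Set.ncard_le_ncard (Set.subset_union_right (s := T))).trans ?_
      rw [← Set.union_sdiff_self]
      refine (Set.ncard_union_le _ _).trans (Nat.add_le_add_left ?_ _)
      rw [← Set.ncard_image_of_injective _ hinj]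
      refine Set.ncard_le_ncard ?_
      rintro _ ⟨u, ⟨hu, huT⟩, rfl⟩
      refine ⟨not_not.1 huT, ?_⟩
      obtain ⟨v', hv', u', hu', h⟩ := hadj hu
      rw [hw] at hv'
      rw [hsing u huT] at hu'
      rw [Set.mem_singleton_iff] at hv' hu'
      rw [hv', hu', hc, hvi] at h
      exact h.symm
    have h1 := hdeg w
    have h2 := hncompl i
    omega
  have hall : (∀ i, r i = n i) → a + (p - 1) * b ≤ T.ncard := by
    intro h
    have hSe : ∀ v, v ∉ S := by
      intro v hv
      have hss : {u | u ∉ S ∧ c u = c v} = {u | c u = c v} :=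
        Set.eq_of_subset_of_ncard_le (fun u hu => hu.2) (h (c v)).ge
      have : v ∈ {u | u ∉ S ∧ c u = c v} := hss ▸ rfl
      exact this.1 hv
    have hTu : T = Set.univ := Set.eq_univ_of_forall fun w => hSe _
    have h1 := hdeg w₀
    have h2 := Set.ncard_le_ncard (Set.subset_univ (H.neighborSet w₀))
    rw [hTu]
    omega
  have hzero := sum_eq_zero_of_degree_bounds ha hp hp2 n r hc0 hci
    (fun i => Set.ncard_le_ncard fun v hv => hv.2) ht2 ht hd hall
  rw [hrsum, Set.ncard_eq_zero] at hzero
  refine Fintype.card_le_of_surjective f fun v => ?_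
  obtain ⟨w, hw⟩ : v ∈ S := by
    by_contra hv
    exact Set.notMem_empty v (hzero ▸ hv)
  have := hf w
  rw [hw] at this
  exact ⟨w, this⟩

lemma memDHat_of_class_sizes {a b p k : ℕ} (ha : 1 ≤ a) (hab : a ≤ b) (hp : 2 ≤ p)
    (hk : k + 1 = a + (p - 1) * b) (hp2 : p = 2 → a = b) {V : Type} [Fintype V]
    {G : SimpleGraph V} {c : V → Fin (p + 1)}
    (hc : ∀ u v, G.Adj u v ↔ c u ≠ c v) (hc0 : {v | c v = 0}.ncard = a)
    (hci : ∀ i, i ≠ 0 → {v | c v = i}.ncard = b) : MemDHat k G := by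
  have hcard : Fintype.card V = k + 1 + b := by
    have h := ncard_eq_sum_ncard_class c (fun _ => True)
    simp only [true_and, Set.ofPred_true, Set.ncard_univ, Nat.card_eq_fintype_card] at h
    rw [h, Fin.sum_univ_succ, hc0, Finset.sum_congr rfl fun i _ => hci _ (Fin.succ_ne_zero i), hk]
    obtain ⟨q, rfl⟩ : ∃ q, p = q + 1 := ⟨p - 1, by omega⟩
    simp
    ring
  have hdeg : ∀ v, c v ≠ 0 → (G.neighborSet v).ncard = k + 1 := by
    intro v hv
    have := ncard_neighborSet_add_ncard_class hc v
    rw [hci _ hv] at this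
    omega
  refine memDHat_iff.2 ⟨lt_minDegC_iff.2 ⟨?_, fun v => ?_⟩, fun W _ H hH hlt => ?_⟩
  · exact Fintype.card_pos_iff.1 (by omega)
  · by_cases hv : c v = 0
    · have := ncard_neighborSet_add_ncard_class hc v
      rw [hv, hc0] at this
      omega
    · rw [hdeg v hv]
      exact k.lt_succ_self
  · obtain ⟨e, he⟩ := hH.exists_equiv_of_card_le
      (card_le_of_isMinorOf_of_lt_minDegC ha hp hk hp2 hc hc0 hci hH hlt)
    have hback : ∀ u w, c (e u) ≠ 0 → G.Adj (e u) (e w) → H.Adj u w := by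
      intro u w hu huw
      have hsub : e '' H.neighborSet u ⊆ G.neighborSet (e u) := by
        rintro _ ⟨x, hx, rfl⟩
        exact he _ _ hx
      have heq := Set.eq_of_subset_of_ncard_le hsub (by
        rw [hdeg _ hu, Set.ncard_image_of_injective _ e.injective]
        exact (lt_minDegC_iff.1 hlt).2 u)
      have hw : e w ∈ e '' H.neighborSet u := heq ▸ huw
      obtain ⟨x, hx, hxw⟩ := hw
      exact e.injective hxw ▸ hx
    refine ⟨⟨e, fun {u w} => ⟨fun h => ?_, he u w⟩⟩⟩
    by_cases hu : c (e u) = 0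
    · exact (hback w u (fun hw => (hc _ _).1 h (hu.trans hw.symm)) h.symm).symm
    · exact hback u w hu h

/-! ### Minor-minimal complete multipartite graphs -/

/-- Deleting an edge of a graph in `D̂_k` lowers the minimum degree. -/
lemma MemDHat.ncard_neighborSet_le_of_adj {k : ℕ} {V : Type} [Fintype V] {G : SimpleGraph V}
    (hG : MemDHat k G) {u v : V} (huv : G.Adj u v) :
    (G.neighborSet u).ncard ≤ k + 1 ∨ (G.neighborSet v).ncard ≤ k + 1 := by
  classical
  obtain ⟨hk, hiso⟩ := memDHat_iff.1 hG
  by_contra! hcon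
  set G' := G.deleteEdges {s(u, v)} with hG'
  have hadj : ∀ x y, G'.Adj x y ↔ G.Adj x y ∧ s(x, y) ≠ s(u, v) := by
    intro x y
    simp [hG', SimpleGraph.deleteEdges_adj]
  have hle : G' ≤ G := fun x y h => ((hadj x y).1 h).1
  have hlt : k < minDegC G' := by
    rw [lt_minDegC_iff] at hk ⊢
    refine ⟨hk.1, fun w => ?_⟩
    have hsub : ∀ z, (w = u → z = v) → (w = v → z = u) →
        G.neighborSet w \ {z} ⊆ G'.neighborSet w := by
      rintro z hz hz' x ⟨hx, hxz⟩
      refine (hadj w x).2 ⟨hx, ?_⟩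
      rw [Set.mem_singleton_iff] at hxz
      rw [Ne, Sym2.eq_iff]
      rintro (⟨h, h'⟩ | ⟨h, h'⟩)
      · exact hxz (h'.trans (hz h).symm)
      · exact hxz (h'.trans (hz' h).symm)
    have hdiff : ∀ z, (G.neighborSet w).ncard ≤ (G.neighborSet w \ {z}).ncard + 1 :=
      fun z => Nat.le_add_of_sub_le (Set.pred_ncard_le_ncard_sdiff_singleton _ z)
    by_cases hwu : w = u
    · have h1 := Set.ncard_le_ncard (hsub v (fun _ => rfl) fun h => absurd (hwu.symm.trans h) huv.ne)
      have h2 := hdiff v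
      have h3 := hcon.1
      rw [← hwu] at h3
      omega
    · by_cases hwv : w = v
      · have h1 := Set.ncard_le_ncard (hsub u (fun h => absurd h hwu) fun _ => rfl)
        have h2 := hdiff u
        have h3 := hcon.2
        rw [← hwv] at h3
        omega
      · have h1 := Set.ncard_le_ncard (hsub w (fun h => absurd h hwu) fun h => absurd h hwv)
        rw [Set.sdiff_singleton_eq_self (by simp)] at h1
        exact (hk.2 w).trans_le h1
  obtain ⟨e⟩ := hiso V G' (.of_le hle) hlt
  have hcard := e.card_edgeFinset_eq
  have hss : G'.edgeFinset ⊂ G.edgeFinset := by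
    refine SimpleGraph.edgeFinset_ssubset_edgeFinset.2 (lt_of_le_of_ne hle fun h => ?_)
    exact ((hadj u v).1 (h ▸ huv)).2 rfl
  exact (Finset.card_lt_card hss).ne hcard

/-- Contracting an edge of a complete multipartite graph in `D̂_k` lowers the minimum degree. -/
lemma MemDHat.card_le_or_exists_of_adj {k : ℕ} {V ι : Type} [Fintype V] {G : SimpleGraph V}
    (hG : MemDHat k G) {c : V → ι} (hc : ∀ u v, G.Adj u v ↔ c u ≠ c v) {x y : V}
    (hxy : c x ≠ c y) :
    Fintype.card V ≤ k + 2 ∨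
      ∃ w, c w ≠ c x ∧ c w ≠ c y ∧ (G.neighborSet w).ncard ≤ k + 1 := by
  classical
  obtain ⟨hk, hiso⟩ := memDHat_iff.1 hG
  rw [lt_minDegC_iff] at hk
  by_contra! hcon
  obtain ⟨hcard, hother⟩ := hcon
  have hne : x ≠ y := fun h => hxy (h ▸ rfl)
  let H : SimpleGraph {v // v ≠ y} :=
    { Adj := fun u w => u ≠ w ∧ (G.Adj u w ∨ u.1 = x ∨ w.1 = x)
      symm := ⟨fun u w h => ⟨h.1.symm, h.2.imp (fun h => h.symm) Or.symm⟩⟩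
      loopless := ⟨fun u h => h.1 rfl⟩ }
  have hcardH : Fintype.card {v // v ≠ y} + 1 = Fintype.card V := by
    have : 0 < Fintype.card V := Fintype.card_pos_iff.2 ⟨x⟩
    rw [Fintype.card_subtype_compl, Fintype.card_subtype_eq]
    omega
  have hminor : IsMinorOf H G := by
    refine ⟨fun u => {v | v = u ∨ u.1 = x ∧ v = y}, fun u => ⟨u, Or.inl rfl⟩, ?_, ?_, ?_⟩
    · intro u w huw
      rw [Set.disjoint_left]
      rintro v (h | h) (h' | h')
      · exact huw (Subtype.ext (h.symm.trans h'))
      · exact u.2 (h.symm.trans h'.2)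
      · exact w.2 (h'.symm.trans h.2)
      · exact huw (Subtype.ext (h.1.trans h'.1.symm))
    · intro u
      refine (SimpleGraph.connected_iff_exists_forall_reachable _).2 ⟨⟨u, Or.inl rfl⟩, ?_⟩
      rintro ⟨v, hv | hv⟩
      · subst hv
        rfl
      · refine SimpleGraph.Adj.reachable (show G.Adj u v from ?_)
        rw [hv.1, hv.2]
        exact (hc x y).2 hxy
    · have hdom : ∀ v, G.Adj x v ∨ G.Adj y v := by
        intro v
        simp only [hc]
        by_contra! h
        exact hxy (h.1.trans h.2.symm)
      rintro u w ⟨huw, h | h | h⟩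
      · exact ⟨u, Or.inl rfl, w, Or.inl rfl, h⟩
      · rcases hdom w with h' | h'
        · exact ⟨u, Or.inl rfl, w, Or.inl rfl, h ▸ h'⟩
        · exact ⟨y, Or.inr ⟨h, rfl⟩, w, Or.inl rfl, h'⟩
      · rcases hdom u with h' | h'
        · exact ⟨u, Or.inl rfl, w, Or.inl rfl, h ▸ h'.symm⟩
        · exact ⟨u, Or.inl rfl, y, Or.inr ⟨h, rfl⟩, h'.symm⟩
  have hlt : k < minDegC H := by
    refine lt_minDegC_iff.2 ⟨⟨⟨x, hne⟩⟩, fun w => ?_⟩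
    by_cases hwx : w.1 = x
    · have hN : H.neighborSet w = {w}ᶜ := by
        ext u
        change (w ≠ u ∧ _) ↔ u ≠ w
        exact ⟨fun h => h.1.symm, fun h => ⟨h.symm, Or.inr (Or.inl hwx)⟩⟩
      have h1 := Set.ncard_add_ncard_compl ({w} : Set {v // v ≠ y})
      rw [Set.ncard_singleton, Nat.card_eq_fintype_card] at h1
      rw [hN]
      omega
    · have himg : insert x (G.neighborSet w \ {y}) ⊆ Subtype.val '' H.neighborSet w := by
        rintro v (rfl | ⟨hv, hvy⟩)
        · exact ⟨⟨v, hne⟩, ⟨fun h => hwx (congrArg Subtype.val h), Or.inr (Or.inr rfl)⟩, rfl⟩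
        · exact ⟨⟨v, hvy⟩, ⟨fun h => G.ne_of_adj hv (congrArg Subtype.val h), Or.inl hv⟩, rfl⟩
      have h1 := Set.ncard_le_ncard himg
      rw [Set.ncard_image_of_injective _ Subtype.val_injective] at h1
      refine lt_of_lt_of_le ?_ h1
      have h2 := Set.pred_ncard_le_ncard_sdiff_singleton (G.neighborSet w) y
      have h3 : k < (G.neighborSet w).ncard := hk.2 w
      by_cases hcx : c w = c x
      · have hx : x ∉ G.neighborSet w \ {y} := fun h => (hc _ _).1 h.1 hcx
        rw [Set.ncard_insert_of_notMem hx]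
        omega
      · have h4 := Set.ncard_le_ncard (Set.subset_insert x (G.neighborSet w \ {y}))
        by_cases hcy : c w = c y
        · have hy : y ∉ G.neighborSet w := fun h => (hc _ _).1 h hcy
          rw [Set.sdiff_singleton_eq_self hy] at h4 ⊢
          exact h3.trans_le h4
        · have := hother w hcx hcy
          omega
  obtain ⟨e⟩ := hiso _ H hminor hlt
  have := Fintype.card_congr e.toEquiv
  omega

/-- A colouring with a distinguished class can be normalised to one onto `Fin (p + 1)` whose
class `0` is the distinguished one. -/
lemma exists_surjective_fin_coloring {V ι : Type} [Fintype V] (c : V → ι) (v₀ : V) :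
    ∃ (p : ℕ) (d : V → Fin (p + 1)), Function.Surjective d ∧ d v₀ = 0 ∧
      ∀ u v, d u = d v ↔ c u = c v := by
  classical
  have : Fintype (Set.range c) := Fintype.ofFinite _
  have hpos : 0 < Fintype.card (Set.range c) := Fintype.card_pos_iff.2 ⟨⟨c v₀, v₀, rfl⟩⟩
  obtain ⟨p, hp⟩ : ∃ p, Fintype.card (Set.range c) = p + 1 :=
    ⟨Fintype.card (Set.range c) - 1, by omega⟩
  let e := Fintype.equivFinOfCardEq hp
  let e' := e.trans (Equiv.swap (e (Set.rangeFactorization c v₀)) 0)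
  refine ⟨p, e' ∘ Set.rangeFactorization c,
    e'.surjective.comp Set.rangeFactorization_surjective, ?_, fun u v => ?_⟩
  · simp [e']
  · simp [Set.rangeFactorization, Subtype.ext_iff]

lemma MemDHat.exists_class_sizes {k : ℕ} (hk : 1 ≤ k) {V ι : Type} [Fintype V]
    {G : SimpleGraph V} (hG : MemDHat k G) {c : V → ι} (hc : ∀ u v, G.Adj u v ↔ c u ≠ c v) :
    ∃ a b p : ℕ, 1 ≤ a ∧ a ≤ b ∧ 2 ≤ p ∧ k + 1 = a + (p - 1) * b ∧ (p = 2 → a = b) ∧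
      ∃ d : V → Fin (p + 1), (∀ u v : V, G.Adj u v ↔ d u ≠ d v) ∧
        {v : V | d v = 0}.ncard = a ∧ (∀ i : Fin (p + 1), i ≠ 0 → {v : V | d v = i}.ncard = b) := by
  obtain ⟨⟨v₁⟩, hdeg⟩ := lt_minDegC_iff.1 (memDHat_iff.1 hG).1
  obtain ⟨v₀, hv₀⟩ : ∃ v₀, ∀ v, c v ≠ c v₀ → (G.neighborSet v).ncard ≤ k + 1 := by
    by_cases h : ∃ v₀, k + 1 < (G.neighborSet v₀).ncard
    · obtain ⟨v₀, h₀⟩ := h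
      refine ⟨v₀, fun v hv => ?_⟩
      exact (hG.ncard_neighborSet_le_of_adj ((hc v v₀).2 hv)).resolve_right h₀.not_ge
    · push Not at h
      exact ⟨v₁, fun v _ => h v⟩
  obtain ⟨p, d, hsurj, hd0, hd⟩ := exists_surjective_fin_coloring c v₀
  have hdG : ∀ u v : V, G.Adj u v ↔ d u ≠ d v := fun u v => by rw [hc, Ne, Ne, hd]
  have hclass := ncard_neighborSet_add_ncard_class hdG
  obtain ⟨b, hb⟩ : ∃ b, Fintype.card V = k + 1 + b := by
    refine Nat.exists_eq_add_of_le ((hdeg v₁).trans_le ?_)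
    have := hclass v₁
    omega
  have hdi : ∀ i, i ≠ 0 → {v | d v = i}.ncard = b := by
    intro i hi
    obtain ⟨v, rfl⟩ := hsurj i
    have h1 := hclass v
    have h2 := hdeg v
    have h3 := hv₀ v fun h => hi (((hd v v₀).2 h).trans hd0)
    omega
  set a := {v | d v = 0}.ncard with ha
  have hclass₀ : (G.neighborSet v₀).ncard + a = Fintype.card V := by
    have := hclass v₀
    rwa [hd0] at this
  have ha1 : 1 ≤ a := (Set.ncard_pos (Set.toFinite _)).2 ⟨v₀, hd0⟩
  have hab : a ≤ b := by
    have := hdeg v₀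
    omega
  have hcard : Fintype.card V = a + p * b := by
    have h := ncard_eq_sum_ncard_class d (fun _ => True)
    simp only [true_and, Set.ofPred_true, Set.ncard_univ, Nat.card_eq_fintype_card] at h
    rw [h, Fin.sum_univ_succ, Finset.sum_congr rfl fun i _ => hdi _ (Fin.succ_ne_zero i)]
    simp [ha]
  have hp : 2 ≤ p := by
    by_contra! h
    obtain rfl | rfl : p = 0 ∨ p = 1 := by omega
    · omega
    · obtain ⟨y, hy⟩ := hsurj 1
      rcases hG.card_le_or_exists_of_adj hdG (x := v₀) (y := y) (by simp [hd0, hy]) with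
        h | ⟨w, hw0, hw1, -⟩
      · omega
      · rw [hd0] at hw0
        rw [hy] at hw1
        exact (by decide : ∀ i : Fin 2, i ≠ 0 → i ≠ 1 → False) _ hw0 hw1
  refine ⟨a, b, p, ha1, hab, hp, ?_, ?_, d, hdG, rfl, hdi⟩
  · obtain ⟨q, rfl⟩ : ∃ q, p = q + 1 := ⟨p - 1, by omega⟩
    rw [add_mul] at hcard
    rw [Nat.add_sub_cancel]
    omega
  · rintro rfl
    by_contra hne
    obtain ⟨x, hx⟩ := hsurj 1
    obtain ⟨y, hy⟩ := hsurj 2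
    rcases hG.card_le_or_exists_of_adj hdG (x := x) (y := y) (by rw [hx, hy]; decide) with
      h | ⟨w, hw1, hw2, hw⟩
    · omega
    · have hw0 : d w = 0 := by
        rw [hx] at hw1
        rw [hy] at hw2
        exact (by decide : ∀ i : Fin 3, i ≠ 1 → i ≠ 2 → i = 0) _ hw1 hw2
      have := hclass w
      rw [hw0, ← ha] at this
      omega

/-- Theorem 8.1 / Theorem 1.4: for `k ≥ 1`, a complete multipartite graph `G`
is in `D̂_k` iff for some `b ≥ a ≥ 1` and `p ≥ 2`, `G` is isomorphic to the
complete `(p+1)`-partite graph `K_{a,b,…,b}` with one colour class of size `a`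
and `p` colour classes of size `b`, where `k + 1 = a + (p-1)b`, and if `p = 2`
then `a = b`. -/
theorem completeMultipartite_memDHat_iff (k : ℕ) (hk : 1 ≤ k)
    {V : Type} [Fintype V] (G : SimpleGraph V)
    (hG : IsCompleteMultipartiteGraph G) :
    MemDHat k G ↔
      ∃ a b p : ℕ, 1 ≤ a ∧ a ≤ b ∧ 2 ≤ p ∧
        k + 1 = a + (p - 1) * b ∧
        (p = 2 → a = b) ∧
        ∃ c : V → Fin (p + 1),
          (∀ u v : V, G.Adj u v ↔ c u ≠ c v) ∧
          {v : V | c v = 0}.ncard = a ∧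
          (∀ i : Fin (p + 1), i ≠ 0 → {v : V | c v = i}.ncard = b) := by
  obtain ⟨ι, c, hc⟩ := hG
  constructor
  · exact fun h => h.exists_class_sizes hk hc
  · rintro ⟨a, b, p, ha, hab, hp, hkp, hp2, d, hd, hd0, hdi⟩
    exact memDHat_of_class_sizes ha hab hp hkp hp2 hd hd0 hdi
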